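/- For every integer t ≥ 3, the identity w_3^{2^{t-2}-1}·w_4^{2^{t-2}-2} = w_3^{2^{t-2}-2}·g_{2^t-5} + Σ_{i=2}^{t-2} w_3^{2^{t-2}-2^i}·w_4^{2^{i-1}-2}·g_{2^t-3+2^i} holds in the polynomial ring F_2[w_2,w_3,w_4] (for t = 3 the sum is empty). -/

import Mathlib

open MvPolynomial

/-- The polynomials `g_r = g_r^{(4)}` in `F_2[w_2,w_3,w_4]` (variables `X 0 = w_2`,
`X 1 = w_3`, `X 2 = w_4`): `g_0 = 1`, `g_r = 0` for `r < 0`, and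
`g_r = w_2·g_{r-2} + w_3·g_{r-3} + w_4·g_{r-4}` for `r ≥ 1`. -/
noncomputable def g4 : ℤ → MvPolynomial (Fin 3) (ZMod 2)
  | r =>
    if r ≤ 0 then (if r = 0 then 1 else 0)
    else X 0 * g4 (r - 2) + X 1 * g4 (r - 3) + X 2 * g4 (r - 4)
  termination_by r => r.toNat
  decreasing_by all_goals omega

/-- The ideal `I_{n,4} = (g_{n-3}, g_{n-2}, g_{n-1}, g_n)` of `F_2[w_2,w_3,w_4]`. -/
noncomputable def I4 (n : ℤ) : Ideal (MvPolynomial (Fin 3) (ZMod 2)) :=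
  Ideal.span {g4 (n - 3), g4 (n - 2), g4 (n - 1), g4 n}

lemma g4_neg (r : ℤ) (h : r < 0) : g4 r = 0 := by
  rw [g4, if_pos h.le, if_neg h.ne]

lemma g4_zero : g4 0 = 1 := by
  rw [g4]; simp

lemma g4_rec (r : ℤ) (h : 0 < r) :
    g4 r = X 0 * g4 (r - 2) + X 1 * g4 (r - 3) + X 2 * g4 (r - 4) := by
  rw [g4, if_neg (not_le.mpr h)]

lemma two_zero : (2 : MvPolynomial (Fin 3) (ZMod 2)) = 0 := CharTwo.two_eq_zero

lemma g4_rec2 (r : ℤ) (h : 4 < r) :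
    g4 r = X 0 ^ 2 * g4 (r - 4) + X 1 ^ 2 * g4 (r - 6) + X 2 ^ 2 * g4 (r - 8) := by
  rw [g4_rec r (by omega), g4_rec (r - 2) (by omega), g4_rec (r - 3) (by omega),
    g4_rec (r - 4) (by omega)]
  have e5 : r - 3 - 2 = r - 5 := by ring
  have e6 : r - 3 - 3 = r - 6 := by ring
  have e7 : r - 3 - 4 = r - 7 := by ring
  have f4 : r - 2 - 2 = r - 4 := by ring
  have f5 : r - 2 - 3 = r - 5 := by ring
  have f6 : r - 2 - 4 = r - 6 := by ring
  have k6 : r - 4 - 2 = r - 6 := by ring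
  have k7 : r - 4 - 3 = r - 7 := by ring
  have k8 : r - 4 - 4 = r - 8 := by ring
  rw [e5, e6, e7, f4, f5, f6, k6, k7, k8, g4_rec (r - 4) (by omega), k6, k7, k8]
  linear_combination (X 0 * X 1 * g4 (r - 5) + X 0 * X 2 * g4 (r - 6)
    + X 1 * X 2 * g4 (r - 7)) * two_zero

lemma g4_odd_aux (n : ℕ) : ∀ r : ℤ, r < n → g4 (2 * r + 3) = X 1 * g4 r ^ 2 := by
  have h1 : g4 1 = 0 := by
    rw [g4_rec 1 (by omega), g4_neg _ (by omega), g4_neg _ (by omega), g4_neg _ (by omega)]; simp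
  induction n with
  | zero =>
    intro r hr
    rw [g4_neg r (by simpa using hr)]
    rcases eq_or_ne r (-1) with rfl | h
    · norm_num [h1]
    · rw [g4_neg _ (by push_cast at hr; omega)]; simp
  | succ n ih =>
    intro r hr
    push_cast at hr
    rcases lt_or_ge r n with h | h
    · exact ih r h
    rcases eq_or_ne r 0 with rfl | h0
    · rw [g4_rec _ (by omega), g4_zero]
      norm_num
      rw [h1, g4_zero, g4_neg _ (by omega)]; simp
    have hp : 0 < r := by omega
    rw [g4_rec2 _ (by omega), g4_rec r hp]
    have a := ih (r - 2) (by omega)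
    have b := ih (r - 3) (by omega)
    have c := ih (r - 4) (by omega)
    rw [show 2 * r + 3 - 4 = 2 * (r - 2) + 3 by ring, show 2 * r + 3 - 6 = 2 * (r - 3) + 3 by ring,
      show 2 * r + 3 - 8 = 2 * (r - 4) + 3 by ring, a, b, c, CharTwo.add_sq, CharTwo.add_sq]
    ring

lemma g4_odd (r : ℤ) : g4 (2 * r + 3) = X 1 * g4 r ^ 2 :=
  g4_odd_aux (r.toNat + 1) r (by push_cast; omega)

lemma g4_pow (n : ℕ) : g4 (2 ^ (n + 1) - 3) = 0 := by
  induction n with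
  | zero => exact g4_neg _ (by norm_num)
  | succ n ih =>
    rw [show (2 : ℤ) ^ (n + 1 + 1) - 3 = 2 * (2 ^ (n + 1) - 3) + 3 by ring, g4_odd, ih]; simp

lemma g4_key (n : ℕ) : g4 (2 ^ (n + 3) + 1) =
    X 1 ^ 2 * g4 (2 ^ (n + 3) - 5) + X 1 * X 2 ^ 2 * g4 (2 ^ (n + 2) - 5) ^ 2 := by
  have hp : (0 : ℤ) < 2 ^ n := by positivity
  rw [g4_rec2 _ (by rw [pow_add]; omega),
    show (2 : ℤ) ^ (n + 3) + 1 - 4 = 2 ^ (n + 2 + 1) - 3 by ring, g4_pow,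
    show (2 : ℤ) ^ (n + 3) + 1 - 6 = 2 ^ (n + 3) - 5 by ring,
    show (2 : ℤ) ^ (n + 3) + 1 - 8 = 2 * (2 ^ (n + 2) - 5) + 3 by ring, g4_odd]
  ring

lemma main_aux (n : ℕ) :
    (X 1 : MvPolynomial (Fin 3) (ZMod 2)) ^ (2 ^ (n + 1) - 1) * X 2 ^ (2 ^ (n + 1) - 2) =
      X 1 ^ (2 ^ (n + 1) - 2) * g4 (2 ^ (n + 3) - 5)
        + ∑ i ∈ Finset.range n,
            X 1 ^ (2 ^ (n + 1) - 2 ^ (i + 2)) * X 2 ^ (2 ^ (i + 1) - 2)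
              * g4 (2 ^ (n + 3) - 3 + 2 ^ (i + 2)) := by
  induction n with
  | zero =>
    have h := g4_odd 0
    rw [g4_zero] at h
    norm_num at h ⊢
    exact h.symm
  | succ n ih =>
    obtain ⟨m, hm⟩ : ∃ m, 2 ^ (n + 1) = m + 2 :=
      ⟨2 ^ (n + 1) - 2, by have := Nat.one_le_two_pow (n := n); rw [pow_succ]; omega⟩
    have h2 : 2 ^ (n + 1 + 1) = 2 * m + 4 := by rw [pow_succ, hm]; ring
    have ih2 := congrArg (fun p => X 1 * X 2 ^ 2 * p ^ 2) ih
    simp only [CharTwo.add_sq, CharTwo.sum_sq] at ih2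
    have hsum : ∑ i ∈ Finset.range n,
        (X 1 : MvPolynomial (Fin 3) (ZMod 2)) ^ (2 ^ (n + 1 + 1) - 2 ^ (i + 1 + 2))
            * X 2 ^ (2 ^ (i + 1 + 1) - 2) * g4 (2 ^ (n + 1 + 3) - 3 + 2 ^ (i + 1 + 2))
        = X 1 * X 2 ^ 2 * ∑ i ∈ Finset.range n, (X 1 ^ (2 ^ (n + 1) - 2 ^ (i + 2))
            * X 2 ^ (2 ^ (i + 1) - 2) * g4 (2 ^ (n + 3) - 3 + 2 ^ (i + 2))) ^ 2 := by
      rw [Finset.mul_sum]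
      refine Finset.sum_congr rfl fun i _ => ?_
      rw [show (2 : ℤ) ^ (n + 1 + 3) - 3 + 2 ^ (i + 1 + 2)
        = 2 * (2 ^ (n + 3) - 3 + 2 ^ (i + 2)) + 3 by ring, g4_odd,
        show 2 ^ (n + 1 + 1) - 2 ^ (i + 1 + 2) = (2 ^ (n + 1) - 2 ^ (i + 2)) * 2 by
          rw [pow_succ 2 (n + 1), show i + 1 + 2 = i + 2 + 1 by ring, pow_succ 2 (i + 2),
            Nat.sub_mul],
        show 2 ^ (i + 1 + 1) - 2 = (2 ^ (i + 1) - 2) * 2 + 2 by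
          have := Nat.one_le_two_pow (n := i)
          rw [pow_succ 2 (i + 1), pow_succ 2 i]; omega]
      ring
    rw [Finset.sum_range_succ', hsum]
    have key := g4_key (n + 1)
    rw [show (2 : ℤ) ^ (n + 1 + 3) - 3 + 2 ^ (0 + 2) = 2 ^ (n + 1 + 3) + 1 by ring, key]
    rw [show n + 1 + 2 = n + 3 by ring]
    rw [hm] at ih2
    rw [h2, hm]
    generalize (∑ i ∈ Finset.range n, _ : MvPolynomial (Fin 3) (ZMod 2)) = S at ih2 ⊢
    rw [show 2 * m + 4 - 1 = 2 * m + 3 by omega, show 2 * m + 4 - 2 = 2 * m + 2 by omega,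
      show 2 * m + 4 - 2 ^ (0 + 2) = 2 * m by omega]
    rw [show m + 2 - 1 = m + 1 by omega, show m + 2 - 2 = m by omega] at ih2
    norm_num
    linear_combination ih2 - (X 1 ^ (2 * m + 2) * g4 (2 ^ (n + 1 + 3) - 5)) * two_zero

/-- Equation (3.7): for every `t ≥ 3`,
`w_3^{2^{t-2}-1} w_4^{2^{t-2}-2} = w_3^{2^{t-2}-2} g_{2^t-5}
  + Σ_{i=2}^{t-2} w_3^{2^{t-2}-2^i} w_4^{2^{i-1}-2} g_{2^t-3+2^i}`
in `F_2[w_2,w_3,w_4]` (for `t = 3` the sum is empty). -/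
theorem stmt14 (t : ℕ) (ht : 3 ≤ t) :
    (X 1 : MvPolynomial (Fin 3) (ZMod 2)) ^ (2 ^ (t - 2) - 1) * X 2 ^ (2 ^ (t - 2) - 2) =
      X 1 ^ (2 ^ (t - 2) - 2) * g4 (2 ^ t - 5)
        + ∑ i ∈ Finset.Icc 2 (t - 2),
            X 1 ^ (2 ^ (t - 2) - 2 ^ i) * X 2 ^ (2 ^ (i - 1) - 2)
              * g4 (2 ^ t - 3 + 2 ^ i) := by
  obtain ⟨n, rfl⟩ := Nat.exists_eq_add_of_le' ht
  have h := main_aux n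
  rw [show n + 3 - 2 = n + 1 by omega, h, Finset.range_eq_Ico,
    show Finset.Icc 2 (n + 1) = Finset.Ico (0 + 2) (n + 2) by ext; simp; omega,
    ← Finset.sum_Ico_add']
  rfl
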